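/- An essential arrangement A(α) is formal if and only if every λ ∈ Kⁿ satisfying all local relation conditions at rank-2 flats (i.e. λ ∈ ker N^{[3]}) lies in the image of M(α)ᵀ; equivalently, A is formal if and only if A has no nontrivial weak perspective representations up to rank 3. -/

import Mathlib

lemma aux_pair {K V ι : Type*} [Field K] [AddCommGroup V] [Module K V] (α : ι → V)
    (hne : ∀ i, α i ≠ 0) (hprop : ∀ i j : ι, i ≠ j → ∀ c : K, α i ≠ c • α j)
    (a b : ι) (hab : a ≠ b) :
    Module.finrank K (Submodule.span K {α a, α b}) = 2 := by
  have h : LinearIndependent K ![α a, α b] := by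
    rw [LinearIndependent.pair_iff' (hne a)]
    intro c hc
    exact hprop b a hab.symm c hc.symm
  have := finrank_span_eq_card h
  rw [Matrix.range_cons_cons_empty] at this
  simpa using this

lemma aux_functional {K : Type*} [Field K] {n : ℕ} (f : (Fin n → K) →ₗ[K] K) (x : Fin n → K) :
    f x = ∑ i, x i * f (Pi.single i 1) := by
  rw [LinearMap.pi_apply_eq_sum_univ f x]
  refine Finset.sum_congr rfl fun i _ => ?_
  rw [smul_eq_mul]
  congr 2
  ext j
  simp [Pi.single_apply, eq_comm]

lemma aux_short {K V : Type*} [Field K] [AddCommGroup V] [Module K V] {n : ℕ} (α : Fin n → V)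
    (hne : ∀ i, α i ≠ 0) 
    (w : Fin n → K) (hw : ∑ i, w i • α i = 0) (hs : (Function.support w).ncard ≤ 3)
    (h0 : w ≠ 0) : ∃ a c, a ≠ c ∧ ∀ i, w i ≠ 0 → α i ∈ Submodule.span K {α a, α c} := by
  classical
  obtain ⟨c, hc⟩ := Function.ne_iff.1 h0
  have hc : w c ≠ 0 := hc
  obtain ⟨a, hac, ha⟩ : ∃ a, a ≠ c ∧ w a ≠ 0 := by
    by_contra! h
    rw [Finset.sum_eq_single c (fun b _ hb => by rw [h b hb, zero_smul]) (by simp)] at hw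
    exact (smul_ne_zero hc (hne c)) hw
  refine ⟨a, c, hac, fun i hi => ?_⟩
  by_cases hia : i = a
  · subst hia; exact Submodule.subset_span (by simp)
  by_cases hic : i = c
  · subst hic; exact Submodule.subset_span (by simp)
  rw [← Finset.add_sum_erase _ _ (Finset.mem_univ i)] at hw
  rw [← Submodule.smul_mem_iff _ hi, eq_neg_of_add_eq_zero_left hw]
  refine Submodule.neg_mem _ (Submodule.sum_mem _ fun j hj => ?_)
  have hji : j ≠ i := (Finset.mem_erase.1 hj).1
  by_cases hwj : w j = 0
  · simp [hwj]
  refine Submodule.smul_mem _ _ (Submodule.subset_span ?_)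
  by_cases hja : j = a
  · simp [hja]
  by_cases hjc : j = c
  · simp [hjc]
  exfalso
  have hsub : (({i, j, a, c} : Finset (Fin n)) : Set (Fin n)) ⊆ Function.support w := by
    intro k hk
    simp only [Finset.coe_insert, Finset.coe_singleton, Set.mem_insert_iff,
      Set.mem_singleton_iff] at hk
    rcases hk with rfl | rfl | rfl | rfl <;> assumption
  have hle := Set.ncard_le_ncard hsub (Set.toFinite _)
  rw [Set.ncard_coe_finset, Finset.card_insert_of_notMem (by simp [hia, hic, hji.symm]),
    Finset.card_insert_of_notMem (by simp [hja, hjc]),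
    Finset.card_insert_of_notMem (by simp [hac]), Finset.card_singleton] at hle
  omega

lemma aux_local {K V : Type*} [Field K] [AddCommGroup V] [Module K V] {n : ℕ} (α : Fin n → V)
    (γ : Fin n → K) (hγ : ∑ i, γ i • α i = 0) (a b : Fin n)
    (hX : ∀ i, γ i ≠ 0 → α i ∈ Submodule.span K {α a, α b}) :
    γ ∈ Submodule.span K {w : Fin n → K | (∑ i, w i • α i = 0) ∧
            (Function.support w).ncard ≤ 3} := by
  classical
  have h1 : ∀ i, ∃ c d : K, γ i ≠ 0 → c • α a + d • α b = α i := by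
    intro i
    by_cases h : γ i = 0
    · exact ⟨0, 0, fun h' => absurd h h'⟩
    · obtain ⟨c, d, h⟩ := Submodule.mem_span_pair.1 (hX i h)
      exact ⟨c, d, fun _ => h⟩
  choose c d hcd using h1
  have hbound : ∀ (w : Fin n → K) (i : Fin n), (∀ j, w j ≠ 0 → j = i ∨ j = a ∨ j = b) →
      (Function.support w).ncard ≤ 3 := by
    intro w i h
    have : Function.support w ⊆ (({i, a, b} : Finset (Fin n)) : Set (Fin n)) := by
      intro j hj
      simpa using h j hj
    refine (Set.ncard_le_ncard this (Finset.finite_toSet _)).trans ?_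
    rw [Set.ncard_coe_finset]
    exact Finset.card_le_three
  have hsum : ∀ i (x : K), ∑ j, (Pi.single i x : Fin n → K) j • α j = x • α i := by
    intro i x
    rw [Finset.sum_eq_single i]
    · simp
    · intro j _ hj; simp [hj]
    · simp
  let r : Fin n → Fin n → K := fun i => Pi.single i 1 - Pi.single a (c i) - Pi.single b (d i)
  have hr : ∀ i, γ i ≠ 0 → ∑ j, r i j • α j = 0 := by
    intro i hi
    simp only [r, Pi.sub_apply, sub_smul, Finset.sum_sub_distrib, hsum]
    rw [one_smul, ← hcd i hi]; abel
  have hr' : ∀ i j, r i j ≠ 0 → j = i ∨ j = a ∨ j = b := by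
    intro i j h
    by_contra! h'
    exact h (by simp [r, h'.1, h'.2.1, h'.2.2])
  have hrel : ∑ j, (γ - ∑ i, γ i • r i) j • α j = 0 := by
    simp only [Pi.sub_apply, sub_smul, Finset.sum_sub_distrib, hγ, Finset.sum_apply,
      Finset.sum_smul, Pi.smul_apply, smul_eq_mul, mul_smul]
    rw [Finset.sum_comm, zero_sub, neg_eq_zero]
    refine Finset.sum_eq_zero fun i _ => ?_
    rw [← Finset.smul_sum]
    by_cases h : γ i = 0
    · simp [h]
    · rw [hr i h, smul_zero]
  have hsp : ∀ j, (γ - ∑ i, γ i • r i) j ≠ 0 → j = a ∨ j = a ∨ j = b := by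
    intro j h
    by_contra! h'
    apply h
    simp only [Pi.sub_apply, Finset.sum_apply, Pi.smul_apply, smul_eq_mul]
    rw [Finset.sum_eq_single j]
    · simp [r, h'.2.1, h'.2.2]
    · intro i _ hi
      simp [r, h'.2.1, h'.2.2, hi.symm]
    · simp
  have : γ = (γ - ∑ i, γ i • r i) + ∑ i, γ i • r i := by abel
  rw [this]
  refine Submodule.add_mem _ (Submodule.subset_span ⟨hrel, hbound _ a hsp⟩)
    (Submodule.sum_mem _ fun i _ => ?_)
  by_cases h : γ i = 0
  · simp [h]
  · exact Submodule.smul_mem _ _ (Submodule.subset_span ⟨hr i h, hbound _ i (hr' i)⟩)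


/-- An essential arrangement A(α) is formal iff every λ ∈ Kⁿ
satisfying all local relation conditions at the rank-2 flats lies in the image
of M(α)ᵀ, i.e. iff A has no nontrivial weak perspective representations up to
rank 3. -/
theorem formal_iff_no_nontrivial_weak_perspective_reps
    (K : Type*) [Field K] (ℓ n : ℕ)
    (α : Fin n → Module.Dual K (Fin (ℓ + 1) → K))
    (hne : ∀ i, α i ≠ 0)
    (hprop : ∀ i j : Fin n, i ≠ j → ∀ c : K, α i ≠ c • α j)
    (hess : (⨅ i, LinearMap.ker (α i)) = ⊥)
    (T : (Fin (ℓ + 1) → K) →ₗ[K] (Fin n → K))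
    (hT : T = LinearMap.pi fun j => α j) :
    (∀ v : Fin n → K, (∑ i, v i • α i = 0) →
        v ∈ Submodule.span K
          {w : Fin n → K | (∑ i, w i • α i = 0) ∧
            (Function.support w).ncard ≤ 3}) ↔
    (∀ lam : Fin n → K,
      (∀ X : Set (Fin n),
        (∀ j : Fin n, α j ∈ Submodule.span K (α '' X) → j ∈ X) →
        Module.finrank K (Submodule.span K (α '' X)) = 2 →
        ∀ γ : Fin n → K, (∀ i, i ∉ X → γ i = 0) →
          (∑ i, γ i • α i = 0) → ∑ i, γ i * lam i = 0) →
      lam ∈ LinearMap.range T) := by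
  constructor
  · intro hF lam hlam
    by_contra hnot
    obtain ⟨f, hf, hle⟩ := Submodule.exists_le_ker_of_notMem hnot
    apply hf
    have hv : ∑ i, f (Pi.single i 1) • α i = 0 := by
      refine LinearMap.ext fun x => ?_
      have hx : f (T x) = 0 := hle ⟨x, rfl⟩
      rw [aux_functional, hT] at hx
      rw [LinearMap.sum_apply, LinearMap.zero_apply, ← hx]
      refine Finset.sum_congr rfl fun i _ => ?_
      simp [mul_comm]
    let g : (Fin n → K) →ₗ[K] K := ∑ i, lam i • LinearMap.proj i
    have hg : ∀ w, g w = ∑ i, w i * lam i := by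
      intro w
      simp [g, mul_comm]
    have key : Submodule.span K {w : Fin n → K | (∑ i, w i • α i = 0) ∧
            (Function.support w).ncard ≤ 3} ≤ LinearMap.ker g := by
      rw [Submodule.span_le]
      rintro w ⟨hw, hs⟩
      change g w = 0
      by_cases h0 : w = 0
      · rw [h0, map_zero]
      obtain ⟨a, c, hac, hac'⟩ := aux_short α hne w hw hs h0
      rw [hg]
      have hP : Submodule.span K (α '' {j | α j ∈ Submodule.span K {α a, α c}}) =
          Submodule.span K {α a, α c} := by
        apply le_antisymm
        · rw [Submodule.span_le]
          rintro _ ⟨j, hj, rfl⟩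
          exact hj
        · apply Submodule.span_mono
          rintro _ (rfl | rfl)
          · exact ⟨a, Submodule.subset_span (by simp), rfl⟩
          · exact ⟨c, Submodule.subset_span (by simp), rfl⟩
      refine hlam {j | α j ∈ Submodule.span K {α a, α c}} ?_ ?_ w ?_ hw
      · intro j hj
        rwa [hP] at hj
      · rw [hP]
        exact aux_pair α hne hprop a c hac
      · intro i hi
        by_contra hwi
        exact hi (hac' i hwi)
    have h2 : g (fun i => f (Pi.single i 1)) = 0 := key (hF _ hv)
    rw [aux_functional, ← h2, hg]
    exact Finset.sum_congr rfl fun i _ => mul_comm _ _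
  · intro hR v hv
    by_contra hnot
    obtain ⟨f, hf, hle⟩ := Submodule.exists_le_ker_of_notMem hnot
    apply hf
    obtain ⟨x, hx⟩ := hR (fun i => f (Pi.single i 1)) (by
      intro X hX hrank γ hγX hγ
      rw [← aux_functional]
      apply hle
      obtain ⟨a, haX, b, hbX, hab⟩ : ∃ a ∈ X, ∃ b ∈ X, a ≠ b := by
        by_contra! h
        have hsub : X.Subsingleton := fun a ha b hb => h a ha b hb
        rcases hsub.eq_empty_or_singleton with rfl | ⟨a, rfl⟩
        · rw [Set.image_empty, Submodule.span_empty, finrank_bot] at hrank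
          omega
        · rw [Set.image_singleton, finrank_span_singleton (hne a)] at hrank
          omega
      have hsub : Submodule.span K {α a, α b} ≤ Submodule.span K (α '' X) := by
        apply Submodule.span_mono
        rintro _ (rfl | rfl)
        · exact ⟨a, haX, rfl⟩
        · exact ⟨b, hbX, rfl⟩
      have heq := Submodule.eq_of_le_of_finrank_eq hsub
        ((aux_pair α hne hprop a b hab).trans hrank.symm)
      refine aux_local α γ hγ a b fun i hi => ?_
      rw [heq]
      refine Submodule.subset_span ⟨i, ?_, rfl⟩
      by_contra hiX
      exact hi (hγX i hiX))
    have h3 : ∑ i, v i * α i x = 0 := by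
      have h4 : (∑ i, v i • α i) x = 0 := by rw [hv]; rfl
      rw [LinearMap.sum_apply] at h4
      exact h4
    rw [aux_functional, ← h3]
    refine Finset.sum_congr rfl fun i _ => ?_
    have := congrFun hx i
    rw [← this, hT, LinearMap.pi_apply]
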